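/- Every tight finite two-person game form is Nash-solvable: if g : X × Y → Ω is tight, then for all payoff functions u, w : Ω → ℝ the game (g; u, w) has a Nash equilibrium in pure strategies. -/

import Mathlib

/-- A Nash equilibrium of the game `(g; u, w)`. -/
def IsNashEq {X Y Ω : Type*} (g : X × Y → Ω) (u w : Ω → ℝ) (x : X) (y : Y) : Prop :=
  (∀ x' : X, u (g (x', y)) ≤ u (g (x, y))) ∧ (∀ y' : Y, w (g (x, y')) ≤ w (g (x, y)))

/-- `g` is tight: the images of the graphs of any two response strategies intersect. -/
def TightGF {X Y Ω : Type*} (g : X × Y → Ω) : Prop :=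
  ∀ (φ : X → Y) (ψ : Y → X), ∃ x y, g (x, φ x) = g (ψ y, y)

/-!
If Alice's row `x` is cautious, in a leximin sense, then Bob's favourite outcome `a` in that row is
an equilibrium outcome. Let `A` consist of the other outcomes of the row together with everything
Alice strictly prefers to `a`. Caution says that no row lies inside `A`, so tightness provides a
column `y` avoiding `A`. This column meets row `x` in `a`, and contains nothing that Alice prefers
to `a`. A cautious row exists because a change of row that violates caution decreases the set of
outcomes in the Dershowitz–Manna order (better outcomes being smaller), which is well-founded.
-/

section DershowitzManna

variable {α ι : Type*} [Preorder α]

theorem isDershowitzMannaLT_val_of_subset_diff_union_Iio {s t : Finset α} {a : α} (ha : a ∈ s)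
    (hts : (t : Set α) ⊆ (s : Set α) \ {a} ∪ Set.Iio a) :
    Multiset.IsDershowitzMannaLT t.val s.val := by
  classical
  have ha_sdiff : a ∈ s \ t :=
    Finset.mem_sdiff.2 ⟨ha, fun hat => (hts hat).elim (fun h => h.2 rfl) (lt_irrefl a)⟩
  have lt_of_new (b : α) (hb : b ∈ t \ s) : b < a := by
    obtain ⟨hbt, hbs⟩ := Finset.mem_sdiff.1 hb
    exact (hts hbt).resolve_left fun h => hbs h.1
  have sdiff_ne_zero : (s \ t).val ≠ 0 := Finset.val_eq_zero.not.2 (Finset.ne_empty_of_mem ha_sdiff)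
  have split_val (p q : Finset α) : p.val = (p ∩ q).val + (p \ q).val := by
    rw [Finset.inter_val, Finset.sdiff_val, add_comm, Multiset.sub_add_inter]
  exact ⟨(t ∩ s).val, (t \ s).val, (s \ t).val, sdiff_ne_zero, split_val t s,
    Finset.inter_comm t s ▸ split_val s t, fun b hb => ⟨a, ha_sdiff, lt_of_new b hb⟩⟩

theorem exists_forall_not_subset_diff_union_Iio [Nonempty ι] [WellFoundedLT α] {s : ι → Set α}
    (hs : ∀ i, (s i).Finite) :
    ∃ i, ∀ j, ∀ a ∈ s i, ¬ s j ⊆ s i \ {a} ∪ Set.Iio a := by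
  let rank (i : ι) : Multiset α := (hs i).toFinset.val
  have rank_wf : WellFounded (InvImage Multiset.IsDershowitzMannaLT rank) :=
    InvImage.wf rank Multiset.wellFounded_isDershowitzMannaLT
  obtain ⟨i, -, hi⟩ := rank_wf.has_min Set.univ Set.univ_nonempty
  refine ⟨i, fun j a ha hji => hi j trivial ?_⟩
  apply isDershowitzMannaLT_val_of_subset_diff_union_Iio ((hs i).mem_toFinset.2 ha)
  simpa only [Set.Finite.coe_toFinset] using hji

end DershowitzManna

section GameForm

variable {X Y Ω : Type*} {g : X × Y → Ω}

/-- The outcomes that remain possible once Alice has committed to the strategy `x`. -/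
def rowOutcomes (g : X × Y → Ω) (x : X) : Set Ω :=
  Set.range fun y => g (x, y)

/-- Alice's strategy `x` is cautious for the payoff `u` if she cannot rule out an outcome `a` of
row `x` by a change of row that adds only outcomes strictly better for her than `a`. This weakens
leximin optimality so that ties in `u` need no breaking. -/
def IsCautious {β : Type*} [Preorder β] (g : X × Y → Ω) (u : Ω → β) (x : X) : Prop :=
  ∀ x', ∀ a ∈ rowOutcomes g x, ¬ rowOutcomes g x' ⊆ rowOutcomes g x \ {a} ∪ {o | u a < u o}

theorem exists_isCautious {β : Type*} [Preorder β] [Nonempty X] {u : Ω → β}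
    (hrow : ∀ x, (rowOutcomes g x).Finite) (hu : (Set.range u).WellFoundedOn (· > ·)) :
    ∃ x, IsCautious g u x := by
  let : Preorder Ω := Preorder.lift (OrderDual.toDual ∘ u)
  have : WellFoundedLT Ω := ⟨Set.wellFoundedOn_range (f := u) |>.1 hu⟩
  exact exists_forall_not_subset_diff_union_Iio hrow

theorem TightGF.exists_row_subset_or_exists_column_disjoint (ht : TightGF g) (A : Set Ω) :
    (∃ x, rowOutcomes g x ⊆ A) ∨ ∃ y, ∀ x, g (x, y) ∉ A := by
  by_contra! ⟨hrow, hcol⟩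
  have row_escapes (x : X) : ∃ y, g (x, y) ∉ A := by
    simpa only [rowOutcomes, Set.range_subset_iff, not_forall] using hrow x
  choose φ hφ using row_escapes
  choose ψ hψ using hcol
  obtain ⟨x, y, hxy⟩ := ht φ ψ
  exact hφ x (hxy ▸ hψ y)

theorem IsCautious.exists_isNashEq {u w : Ω → ℝ} {x : X} (hx : IsCautious g u x) (ht : TightGF g)
    {y₀ : Y} (hy₀ : ∀ y, w (g (x, y)) ≤ w (g (x, y₀))) :
    ∃ y, IsNashEq g u w x y := by
  let a := g (x, y₀)
  obtain ⟨x', hx'⟩ | ⟨y, hy⟩ := ht.exists_row_subset_or_exists_column_disjoint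
    (rowOutcomes g x \ {a} ∪ {o | u a < u o})
  · exact absurd hx' (hx x' a ⟨y₀, rfl⟩)
  · have hxy : g (x, y) = a := by
      by_contra hne
      exact hy x (Or.inl ⟨⟨y, rfl⟩, hne⟩)
    refine ⟨y, fun x' => ?_, fun y' => hxy ▸ hy₀ y'⟩
    rw [hxy]
    exact not_lt.1 fun hlt => hy x' (Or.inr hlt)

theorem tight_implies_nashSolvable_general [Nonempty X] [Nonempty Y] (ht : TightGF g)
    (hrow : ∀ x, (rowOutcomes g x).Finite) (u w : Ω → ℝ)
    (hu : (Set.range u).WellFoundedOn (· > ·)) :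
    ∃ x y, IsNashEq g u w x y := by
  obtain ⟨x, hx⟩ := exists_isCautious hrow hu
  obtain ⟨_, ⟨y₀, rfl⟩, hy₀⟩ := Set.exists_max_image _ w (hrow x) (Set.range_nonempty _)
  exact ⟨x, hx.exists_isNashEq ht fun y => hy₀ _ ⟨y, rfl⟩⟩

end GameForm

/-- Every tight finite two-person game form is Nash-solvable:
for all payoff functions `u, w : Ω → ℝ`, the game `(g; u, w)` has a Nash
equilibrium in pure strategies. -/
theorem tight_implies_nashSolvable
    {X Y Ω : Type*} [Fintype X] [Fintype Y] [Fintype Ω]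
    [Nonempty X] [Nonempty Y]
    (g : X × Y → Ω) (hsurj : Function.Surjective g)
    (ht : TightGF g)
    (u w : Ω → ℝ) :
    ∃ x y, IsNashEq g u w x y :=
  tight_implies_nashSolvable_general ht (fun _ => Set.toFinite _) u w
    (Set.finite_range u).wellFoundedOn
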